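/- Distributional bilaplacian identity in dimension three: Let n = 3, M ≥ 1, R > 0, and let u ∈ C_c^∞(ℝ³; ℂ). Then ∫_{ℝ³} ∇(Δφ_R)(x)·∇(|u(x)|²) dx = (1/R³) ∫_{|x|<R} |u(x)|² dx + 8πM·|u(0)|². -/

import Mathlib

/-!
Put `v = |u|²`. Since `φ_R` is radial, an explicit computation off the origin gives
`Δφ_R = 2M/r + 1/(2R) - r²/(6R³)` for `0 < r < R` (`lap_phiR_inner`) and `Δφ_R = (2M + 1/3)/r` for
`r > R` (`lap_phiR_outer`). Hence, off a null set, `∇Δφ_R(x) = -G(|x|) x / |x|³` with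
`G(r) = 2M + min(r, R)³/(3R³)`, the function `flux` below (`pdR_lap_phiR`).

The integrand is `O(|x|⁻²)` with compact support, hence integrable on `ℝ³`, and polar coordinates
(`integral_polar`) turn its integral into `∫_{S²} ∫₀^∞ -G(r) d/dr v(rω) dr dω`. Integration by parts
along each ray (`radial_parts`) yields `G(0) v(0) + ∫₀^R (r²/R³) v(rω) dr`, because `G` is continuous
with `G' = r²/R³` on `(0, R)` and `G' = 0` beyond `R`. Integrating over the sphere, of area `4π`,
gives `8πM v(0)` and, by polar coordinates again, `R⁻³ ∫_{|x|<R} v`.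
-/

open MeasureTheory
open scoped BigOperators

noncomputable section

/-- The partial derivative `∂ₖ f` of a real-valued function. -/
noncomputable def pdR {n : ℕ} (f : EuclideanSpace ℝ (Fin n) → ℝ) (k : Fin n)
    (x : EuclideanSpace ℝ (Fin n)) : ℝ :=
  fderiv ℝ f x (EuclideanSpace.single k 1)

/-- The Laplacian `Δf = Σₖ ∂ₖ∂ₖ f` of a real-valued function. -/
noncomputable def lap {n : ℕ} (f : EuclideanSpace ℝ (Fin n) → ℝ)
    (x : EuclideanSpace ℝ (Fin n)) : ℝ :=
  ∑ k, pdR (pdR f k) k x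

/-- The derivative `φ₀'` of the basic radial multiplier. -/
noncomputable def gmult (n : ℕ) (M : ℝ) (r : ℝ) : ℝ :=
  if r ≤ 1 then M + r / (2 * n) - r ^ 3 / (2 * n * (n + 2))
  else M + 1 / (2 * n) - 1 / (2 * n * (n + 2) * r ^ (n - 1))

/-- The basic radial multiplier `φ₀(r) = ∫₀ʳ φ₀'(s) ds`. -/
noncomputable def phi0 (n : ℕ) (M : ℝ) (r : ℝ) : ℝ :=
  ∫ s in (0:ℝ)..r, gmult n M s

/-- The scaled multiplier `φ_R(x) = R φ₀(|x|/R)`. -/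
noncomputable def phiR (n : ℕ) (M R : ℝ) (x : EuclideanSpace ℝ (Fin n)) : ℝ :=
  R * phi0 n M (‖x‖ / R)

/-- Three-dimensional Euclidean space. -/
abbrev E3 : Type := EuclideanSpace ℝ (Fin 3)

/-! ### Radial calculus -/

lemma hasFDerivAt_radial {b : ℝ → ℝ} {b' : ℝ} {x : E3} (hx : x ≠ 0)
    (hb : HasDerivAt b b' ‖x‖) :
    HasFDerivAt (fun y : E3 => b ‖y‖) ((b' / ‖x‖) • innerSL ℝ x) x := by
  have hx' : ‖x‖ ≠ 0 := norm_ne_zero_iff.2 hx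
  have h1 := (hasStrictFDerivAt_norm_sq x).hasFDerivAt.sqrt (by positivity)
  have h2 : HasFDerivAt (fun y : E3 => ‖y‖) (‖x‖⁻¹ • innerSL ℝ x) x := by
    refine (h1.congr_fderiv ?_).congr_of_eventuallyEq (.of_forall fun y => ?_)
    · rw [Real.sqrt_sq (norm_nonneg _)]
      ext y
      simp
      field_simp
    · simp [Real.sqrt_sq (norm_nonneg y)]
  refine (hb.comp_hasFDerivAt x h2).congr_fderiv ?_
  ext y
  simp
  field_simp

lemma pdR_radial {b : ℝ → ℝ} {b' : ℝ} {x : E3} (hx : x ≠ 0)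
    (hb : HasDerivAt b b' ‖x‖) (k : Fin 3) :
    pdR (fun y : E3 => b ‖y‖) k x = b' / ‖x‖ * x k := by
  rw [pdR, (hasFDerivAt_radial hx hb).fderiv]
  simp [EuclideanSpace.inner_single_right]

lemma pdR_radial_mul_coord {a : ℝ → ℝ} {a' : ℝ} {x : E3} (hx : x ≠ 0)
    (ha : HasDerivAt a a' ‖x‖) (k : Fin 3) :
    pdR (fun y : E3 => a ‖y‖ * y k) k x = a ‖x‖ + a' / ‖x‖ * x k ^ 2 := by
  have h1 := (hasFDerivAt_radial hx ha).mul (EuclideanSpace.proj (𝕜 := ℝ) k).hasFDerivAt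
  have h2 : HasFDerivAt (fun y : E3 => a ‖y‖ * y k) _ x := h1
  rw [pdR, h2.fderiv]
  simp [EuclideanSpace.inner_single_right]
  ring

lemma sum_coord_sq (x : E3) : ∑ k, x k ^ 2 = ‖x‖ ^ 2 := by
  simp [EuclideanSpace.norm_sq_eq]

/-! ### The Laplacian of the multiplier -/

lemma gmult_three_continuous (M : ℝ) : Continuous (gmult 3 M) := by
  have h : gmult 3 M = fun r => (M + min r 1 / 6 - min r 1 ^ 3 / 30)
      + (1 / 30 - 1 / (30 * max r 1 ^ 2)) := by
    ext r
    unfold gmult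
    split_ifs with hr
    · rw [min_eq_left hr, max_eq_right hr]; norm_num
    · rw [min_eq_right (not_le.1 hr).le, max_eq_left (not_le.1 hr).le]; norm_num
  rw [h]
  have : ∀ r : ℝ, 30 * max r 1 ^ 2 ≠ 0 := fun r => by
    have : 0 < max r 1 := lt_max_of_lt_right one_pos
    positivity
  fun_prop (disch := assumption)

lemma pdR_phiR (M : ℝ) {R : ℝ} (hR : 0 < R) {x : E3} (hx : x ≠ 0) (k : Fin 3) :
    pdR (phiR 3 M R) k x = gmult 3 M (‖x‖ / R) / ‖x‖ * x k := by
  have h1 : HasDerivAt (phi0 3 M) (gmult 3 M (‖x‖ / R)) (‖x‖ / R) :=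
    intervalIntegral.integral_hasDerivAt_right
      ((gmult_three_continuous M).intervalIntegrable _ _)
      ((gmult_three_continuous M).stronglyMeasurableAtFilter _ _)
      (gmult_three_continuous M).continuousAt
  have h2 : HasDerivAt (fun r => R * phi0 3 M (r / R)) (gmult 3 M (‖x‖ / R)) ‖x‖ := by
    have := (h1.comp ‖x‖ ((hasDerivAt_id ‖x‖).div_const R)).const_mul R
    refine this.congr_deriv ?_
    field_simp
  exact pdR_radial hx h2 k

/-- If `φ_R'(r) = r a(r)` near `r = |x|`, then `Δφ_R = 3a + r a'` at `x`. -/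
lemma lap_phiR_of_eventuallyEq (M : ℝ) {R : ℝ} (hR : 0 < R) {x : E3} (hx : x ≠ 0)
    {a : ℝ → ℝ} {a' : ℝ} (ha : HasDerivAt a a' ‖x‖)
    (hg : ∀ᶠ r in nhds ‖x‖, gmult 3 M (r / R) / r = a r) :
    lap (phiR 3 M R) x = 3 * a ‖x‖ + a' * ‖x‖ := by
  have hx' : ‖x‖ ≠ 0 := norm_ne_zero_iff.2 hx
  have key : ∀ k, pdR (pdR (phiR 3 M R) k) k x = a ‖x‖ + a' / ‖x‖ * x k ^ 2 := by
    intro k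
    rw [← pdR_radial_mul_coord hx ha k]
    unfold pdR
    congr 1
    apply Filter.EventuallyEq.fderiv_eq
    filter_upwards [continuous_norm.continuousAt.eventually hg, isOpen_ne.mem_nhds hx] with y hy hy0
    rw [← hy]
    exact pdR_phiR M hR hy0 k
  rw [lap, Finset.sum_congr rfl fun k _ => key k, Finset.sum_add_distrib, ← Finset.mul_sum,
    sum_coord_sq]
  simp
  field_simp

lemma lap_phiR_inner (M : ℝ) {R : ℝ} (hR : 0 < R) {x : E3} (hx : x ≠ 0) (hxR : ‖x‖ < R) :
    lap (phiR 3 M R) x = 2 * M / ‖x‖ + 1 / (2 * R) - ‖x‖ ^ 2 / (6 * R ^ 3) := by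
  have hx' : ‖x‖ ≠ 0 := norm_ne_zero_iff.2 hx
  have ha : HasDerivAt (fun r : ℝ => M * r⁻¹ + 1 / (6 * R) - r ^ 2 / (30 * R ^ 3))
      (M * (-(‖x‖ ^ 2)⁻¹) - 2 * ‖x‖ / (30 * R ^ 3)) ‖x‖ := by
    have h2 := (hasDerivAt_pow 2 ‖x‖).div_const (30 * R ^ 3)
    refine ((((hasDerivAt_inv hx').const_mul M).add_const (1 / (6 * R))).sub h2).congr_deriv ?_
    norm_num
  rw [lap_phiR_of_eventuallyEq M hR hx ha]
  · field_simp; ring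
  · filter_upwards [Iio_mem_nhds hxR, isOpen_ne.mem_nhds hx'] with r hr hr0
    have : r / R ≤ 1 := (div_le_one hR).2 (le_of_lt hr)
    have hr0 : r ≠ 0 := hr0
    simp only [gmult, this, if_true]
    push_cast
    field_simp
    ring

lemma lap_phiR_outer (M : ℝ) {R : ℝ} (hR : 0 < R) {x : E3} (hxR : R < ‖x‖) :
    lap (phiR 3 M R) x = (2 * M + 1 / 3) / ‖x‖ := by
  have hx' : ‖x‖ ≠ 0 := (hR.trans hxR).ne'
  have hx : x ≠ 0 := norm_ne_zero_iff.1 hx'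
  have ha : HasDerivAt (fun r : ℝ => (M + 1 / 6) * r⁻¹ - R ^ 2 / 30 * (r ^ 3)⁻¹)
      ((M + 1 / 6) * (-(‖x‖ ^ 2)⁻¹) - R ^ 2 / 30 * (-(3 * ‖x‖ ^ 2) / (‖x‖ ^ 3) ^ 2)) ‖x‖ := by
    have h2 := ((hasDerivAt_pow 3 ‖x‖).inv (by positivity)).const_mul (R ^ 2 / 30)
    refine (((hasDerivAt_inv hx').const_mul (M + 1 / 6)).sub h2).congr_deriv ?_
    norm_num
  rw [lap_phiR_of_eventuallyEq M hR hx ha]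
  · field_simp; ring
  · filter_upwards [Ioi_mem_nhds hxR] with r hr
    have : ¬ r / R ≤ 1 := not_le.2 ((one_lt_div hR).2 hr)
    have hr0 : r ≠ 0 := (hR.trans hr).ne'
    simp only [gmult, this, if_false]
    norm_num
    field_simp

/-- The flux profile `G(r) = -r² ∂ᵣ(Δφ_R)`; the total outward flux of `-∇Δφ_R` through the sphere
of radius `r` is `4π G(r)`. -/
def flux (M R r : ℝ) : ℝ := 2 * M + min r R ^ 3 / (3 * R ^ 3)

lemma pdR_lap_phiR (M : ℝ) {R : ℝ} (hR : 0 < R) {x : E3} (hx : x ≠ 0) (hxR : ‖x‖ ≠ R)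
    (k : Fin 3) :
    pdR (lap (phiR 3 M R)) k x = -(flux M R ‖x‖ / ‖x‖ ^ 3) * x k := by
  have hx' : ‖x‖ ≠ 0 := norm_ne_zero_iff.2 hx
  rcases hxR.lt_or_gt with h | h
  · have hb : HasDerivAt (fun r : ℝ => 2 * M * r⁻¹ + 1 / (2 * R) - r ^ 2 / (6 * R ^ 3))
        (2 * M * (-(‖x‖ ^ 2)⁻¹) - 2 * ‖x‖ / (6 * R ^ 3)) ‖x‖ := by
      have h2 := (hasDerivAt_pow 2 ‖x‖).div_const (6 * R ^ 3)
      refine ((((hasDerivAt_inv hx').const_mul (2 * M)).add_const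
        (1 / (2 * R))).sub h2).congr_deriv ?_
      norm_num
    have e : lap (phiR 3 M R) =ᶠ[nhds x]
        fun y => 2 * M * ‖y‖⁻¹ + 1 / (2 * R) - ‖y‖ ^ 2 / (6 * R ^ 3) := by
      filter_upwards [continuous_norm.continuousAt.eventually (Iio_mem_nhds h),
        isOpen_ne.mem_nhds hx] with y hy hy0
      rw [lap_phiR_inner M hR hy0 hy, div_eq_mul_inv (2 * M)]
    rw [pdR, e.fderiv_eq]
    refine (pdR_radial hx hb k).trans ?_
    rw [flux, min_eq_left h.le]
    field_simp
    ring
  · have hb : HasDerivAt (fun r : ℝ => (2 * M + 1 / 3) * r⁻¹)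
        ((2 * M + 1 / 3) * (-(‖x‖ ^ 2)⁻¹)) ‖x‖ := (hasDerivAt_inv hx').const_mul _
    have e : lap (phiR 3 M R) =ᶠ[nhds x] fun y => (2 * M + 1 / 3) * ‖y‖⁻¹ := by
      filter_upwards [continuous_norm.continuousAt.eventually (Ioi_mem_nhds h)] with y hy
      rw [lap_phiR_outer M hR hy, div_eq_mul_inv]
    rw [pdR, e.fderiv_eq]
    refine (pdR_radial hx hb k).trans ?_
    rw [flux, min_eq_right h.le]
    field_simp

/-! ### Polar coordinates -/

/-- Integration in polar coordinates on `ℝ³`, with the integrability over the unit sphere of the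
integrals along rays. -/
lemma integral_polar {f : E3 → ℝ} (hf : Integrable f) :
    Integrable (fun w : Metric.sphere (0 : E3) 1 =>
        ∫ r in Set.Ioi (0 : ℝ), r ^ 2 * f (r • (w : E3))) (volume : Measure E3).toSphere ∧
    ∫ x, f x = ∫ w : Metric.sphere (0 : E3) 1,
      (∫ r in Set.Ioi (0 : ℝ), r ^ 2 * f (r • (w : E3))) ∂(volume : Measure E3).toSphere := by
  have hdim : Module.finrank ℝ E3 - 1 = 2 := by simp
  have mp := (volume : Measure E3).measurePreserving_homeomorphUnitSphereProd
  have me := (homeomorphUnitSphereProd E3).measurableEmbedding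
  rw [hdim] at mp
  set g : Metric.sphere (0 : E3) 1 × Set.Ioi (0 : ℝ) → ℝ :=
    fun p => f ((homeomorphUnitSphereProd E3).symm p : E3) with hg
  have hcomp : (fun x : ({0}ᶜ : Set E3) => g (homeomorphUnitSphereProd E3 x))
      = fun x : ({0}ᶜ : Set E3) => f (x : E3) := by
    ext x
    rw [hg]
    simp only [Homeomorph.symm_apply_apply]
  have hgi : Integrable g ((volume : Measure E3).toSphere.prod (Measure.volumeIoiPow 2)) := by
    rw [← mp.integrable_comp_emb me]
    change Integrable (fun x => g (homeomorphUnitSphereProd E3 x)) _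
    rw [hcomp]
    have := (integrableOn_iff_comap_subtypeVal
      (measurableSet_singleton (0 : E3)).compl (μ := volume) (f := f)).1 hf.integrableOn
    exact this
  have hin : ∀ w, ∫ r, g (w, r) ∂(Measure.volumeIoiPow 2)
      = ∫ r in Set.Ioi (0 : ℝ), r ^ 2 * f (r • (w : E3)) := by
    intro w
    simp only [Measure.volumeIoiPow, ENNReal.ofReal]
    rw [integral_withDensity_eq_integral_smul
      ((measurable_subtype_coe.pow_const _).real_toNNReal),
      ← integral_subtype_comap measurableSet_Ioi fun r : ℝ => r ^ 2 * f (r • (w : E3))]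
    congr 1
    ext r
    rw [NNReal.smul_def, Real.coe_toNNReal _ (pow_nonneg r.2.out.le _)]
    simp [hg]
  simp only [← hin]
  refine ⟨hgi.integral_prod_left, ?_⟩
  calc ∫ x, f x = ∫ x : ({0}ᶜ : Set E3), f (x : E3) ∂((volume : Measure E3).comap (↑)) := by
        rw [integral_subtype_comap (measurableSet_singleton _).compl f,
          restrict_compl_singleton]
    _ = ∫ p, g p ∂((volume : Measure E3).toSphere.prod (Measure.volumeIoiPow 2)) := by
        rw [← mp.integral_comp me g, hcomp]
    _ = _ := integral_prod _ hgi

/-! ### Integration by parts along rays -/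

/-- Integration by parts on the half-line. The boundary term at `0` produces the Dirac mass, and
`G' = r²/R³` on `(0, R)` the integral over the ball; the boundary terms at `R` cancel since `G` is
continuous there. -/
lemma radial_parts (M : ℝ) {R : ℝ} (hR : 0 < R) {v : ℝ → ℝ} (hv : ContDiff ℝ 1 v)
    (hc : HasCompactSupport v) :
    ∫ r in Set.Ioi (0 : ℝ), -(flux M R r * deriv v r)
      = 2 * M * v 0 + 1 / R ^ 3 * ∫ r in Set.Ioc (0 : ℝ) R, r ^ 2 * v r := by
  have hdc : Continuous (deriv v) := hv.continuous_deriv le_rfl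
  have hfc : Continuous (flux M R) := by unfold flux; fun_prop
  have hint : Integrable (fun r => -(flux M R r * deriv v r)) :=
    (hfc.mul hdc).neg.integrable_of_hasCompactSupport hc.deriv.mul_left.neg
  have hd : ∀ r, HasDerivAt v (deriv v r) r := fun r =>
    (hv.differentiable one_ne_zero r).hasDerivAt
  rw [← Set.Ioc_union_Ioi_eq_Ioi hR.le, setIntegral_union (Set.Ioc_disjoint_Ioi le_rfl)
    measurableSet_Ioi hint.integrableOn hint.integrableOn]
  have h2 : ∫ r in Set.Ioi R, -(flux M R r * deriv v r) = (2 * M + 1 / 3) * v R := by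
    have : ∀ r ∈ Set.Ioi R, -(flux M R r * deriv v r) = -(2 * M + 1 / 3) * deriv v r := by
      intro r hr
      rw [flux, min_eq_right (le_of_lt hr)]
      field_simp
    rw [setIntegral_congr_fun measurableSet_Ioi this, integral_const_mul,
      hc.integral_Ioi_deriv_eq hv]
    ring
  have h1 : ∫ r in Set.Ioc 0 R, -(flux M R r * deriv v r)
      = 2 * M * v 0 - (2 * M + 1 / 3) * v R
        + 1 / R ^ 3 * ∫ r in Set.Ioc (0 : ℝ) R, r ^ 2 * v r := by
    have : ∀ r ∈ Set.Ioc 0 R, -(flux M R r * deriv v r)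
        = -(2 * M + r ^ 3 / (3 * R ^ 3)) * deriv v r := by
      intro r hr
      rw [flux, min_eq_left hr.2]
      ring
    rw [setIntegral_congr_fun measurableSet_Ioc this, ← intervalIntegral.integral_of_le hR.le,
      ← intervalIntegral.integral_of_le hR.le]
    have hG : ∀ r, HasDerivAt (fun r : ℝ => -(2 * M + r ^ 3 / (3 * R ^ 3)))
        (-(r ^ 2 / R ^ 3)) r := fun r => by
      refine (((hasDerivAt_pow 3 r).div_const (3 * R ^ 3)).const_add (2 * M)).neg.congr_deriv ?_
      norm_num
      field_simp
    rw [intervalIntegral.integral_mul_deriv_eq_deriv_mul (fun r _ => hG r) (fun r _ => hd r)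
      ((by fun_prop : Continuous fun r : ℝ => -(r ^ 2 / R ^ 3)).intervalIntegrable _ _)
      (hdc.intervalIntegrable _ _), ← intervalIntegral.integral_const_mul]
    have e : ∀ r : ℝ, -(r ^ 2 / R ^ 3) * v r = -(1 / R ^ 3 * (r ^ 2 * v r)) := fun r => by ring
    simp only [e, intervalIntegral.integral_neg]
    field_simp
    ring
  rw [h1, h2]
  ring

/-- The singularity `|x|⁻²` is locally integrable in `ℝ³`, so `∇Δφ_R · ∇v` is integrable. -/
lemma integrable_flux_field {M : ℝ} (hM : 0 ≤ M) {R : ℝ} (hR : 0 < R) {v : E3 → ℝ}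
    (hv : ContDiff ℝ 1 v) (hc : HasCompactSupport v) :
    Integrable (fun x : E3 => -(flux M R ‖x‖ / ‖x‖ ^ 3) * fderiv ℝ v x x) := by
  have hdc : Continuous (fderiv ℝ v) := hv.continuous_fderiv one_ne_zero
  obtain ⟨C, hC⟩ := hdc.bounded_above_of_compact_support (hc.fderiv ℝ)
  obtain ⟨A, hA⟩ := (hc.fderiv ℝ).isCompact.isBounded.subset_ball (0 : E3)
  have hfc : Continuous (flux M R) := by unfold flux; fun_prop
  have hC0 : 0 ≤ C := (norm_nonneg _).trans (hC 0)
  have hdom : Integrable (fun x : E3 =>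
      (Set.Iio A).indicator (fun r : ℝ => (2 * M + 1 / 3) * C / r ^ 2) ‖x‖) := by
    rw [integrable_fun_norm_addHaar]
    have : IntegrableOn (fun _ : ℝ => (2 * M + 1 / 3) * C) (Set.Ioo 0 A) :=
      integrableOn_const (by simp)
    rw [← integrable_indicator_iff measurableSet_Ioo] at this
    refine this.integrableOn.congr_fun (fun r hr => ?_) measurableSet_Ioi
    have hr0 : 0 < r := hr
    by_cases h : r < A
    · simp [h, hr0]
      field_simp
    · simp [h]
  refine hdom.mono' ?_ (.of_forall fun x => ?_)
  · have h1 : Measurable fun x : E3 => -(flux M R ‖x‖ / ‖x‖ ^ 3) :=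
      ((hfc.measurable.comp measurable_norm).div (measurable_norm.pow_const 3)).neg
    have h2 : Continuous fun x : E3 => fderiv ℝ v x x := hdc.clm_apply continuous_id
    exact (h1.mul h2.measurable).aestronglyMeasurable
  · by_cases hxA : ‖x‖ < A
    · rcases eq_or_ne x 0 with rfl | hx
      · simp [Set.indicator]
      have hx' : 0 < ‖x‖ := norm_pos_iff.2 hx
      have hm : 0 ≤ min ‖x‖ R := le_min hx'.le hR.le
      have hf0 : 0 ≤ flux M R ‖x‖ := by unfold flux; positivity
      have hf1 : flux M R ‖x‖ ≤ 2 * M + 1 / 3 := by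
        unfold flux
        have : min ‖x‖ R ^ 3 ≤ R ^ 3 := pow_le_pow_left₀ hm (min_le_right _ _) 3
        have : min ‖x‖ R ^ 3 / (3 * R ^ 3) ≤ 1 / 3 := by
          rw [div_le_iff₀ (by positivity)]; linarith
        linarith
      have hd : ‖fderiv ℝ v x x‖ ≤ C * ‖x‖ := (fderiv ℝ v x).le_of_opNorm_le (hC x) x
      rw [Set.indicator_of_mem (show ‖x‖ ∈ Set.Iio A from hxA), norm_mul, norm_neg,
        Real.norm_of_nonneg (by positivity : 0 ≤ flux M R ‖x‖ / ‖x‖ ^ 3)]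
      calc flux M R ‖x‖ / ‖x‖ ^ 3 * ‖fderiv ℝ v x x‖
          ≤ (2 * M + 1 / 3) / ‖x‖ ^ 3 * (C * ‖x‖) := by gcongr
        _ = (2 * M + 1 / 3) * C / ‖x‖ ^ 2 := by field_simp
    · have : fderiv ℝ v x = 0 := by
        by_contra h
        exact hxA (by simpa using hA (subset_tsupport _ h))
      simp [this, hxA]

lemma integral_flux_field {M : ℝ} (hM : 0 ≤ M) {R : ℝ} (hR : 0 < R) {v : E3 → ℝ}
    (hv : ContDiff ℝ 1 v) (hc : HasCompactSupport v) :
    ∫ x : E3, -(flux M R ‖x‖ / ‖x‖ ^ 3) * fderiv ℝ v x x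
      = 1 / R ^ 3 * (∫ x in {x : E3 | ‖x‖ < R}, v x) + 8 * Real.pi * M * v 0 := by
  have hball : {x : E3 | ‖x‖ < R} = Metric.ball 0 R := by ext; simp
  have hvi : Integrable v := hv.continuous.integrable_of_hasCompactSupport hc
  have harea : (volume : Measure E3).toSphere.real Set.univ = 4 * Real.pi := by
    rw [Measure.toSphere_real_apply_univ, measureReal_def, EuclideanSpace.volume_ball_fin_three]
    rw [ENNReal.toReal_mul, ENNReal.toReal_ofReal (by positivity)]
    simp
    ring
  -- In polar coordinates the weight `r²` turns the integrand into `-G(r) d/dr v(rω)`.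
  have hray : ∀ w : Metric.sphere (0 : E3) 1,
      ∫ r in Set.Ioi (0 : ℝ), r ^ 2 * (-(flux M R ‖r • (w : E3)‖ / ‖r • (w : E3)‖ ^ 3)
          * fderiv ℝ v (r • (w : E3)) (r • (w : E3)))
        = 2 * M * v 0 + 1 / R ^ 3 * ∫ r in Set.Ioi (0 : ℝ),
            r ^ 2 * (Metric.ball (0 : E3) R).indicator v (r • (w : E3)) := by
    intro w
    have hw : ‖(w : E3)‖ = 1 := by simp
    have hline : ContDiff ℝ 1 fun r : ℝ => v (r • (w : E3)) :=
      hv.comp (contDiff_id.smul contDiff_const)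
    have hcline : HasCompactSupport fun r : ℝ => v (r • (w : E3)) :=
      hc.comp_isClosedEmbedding
        (Isometry.isClosedEmbedding (Isometry.of_dist_eq fun a b => by
          rw [dist_eq_norm, ← sub_smul, norm_smul, hw, mul_one, dist_eq_norm]))
    have hderiv : ∀ r : ℝ, deriv (fun r : ℝ => v (r • (w : E3))) r
        = fderiv ℝ v (r • (w : E3)) w := fun r => by
      have h1 : HasDerivAt (fun r : ℝ => r • (w : E3)) (w : E3) r := by
        simpa using (hasDerivAt_id r).smul_const (w : E3)
      exact ((hv.differentiable one_ne_zero _).hasFDerivAt.comp_hasDerivAt r h1).deriv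
    have hl : ∀ r ∈ Set.Ioi (0 : ℝ), r ^ 2 * (-(flux M R ‖r • (w : E3)‖ / ‖r • (w : E3)‖ ^ 3)
          * fderiv ℝ v (r • (w : E3)) (r • (w : E3)))
        = -(flux M R r * deriv (fun r : ℝ => v (r • (w : E3))) r) := by
      intro r hr
      have hr0 : 0 < r := hr
      rw [hderiv, norm_smul, hw, mul_one, Real.norm_of_nonneg hr0.le, map_smul, smul_eq_mul]
      field_simp
    have hrhs : ∫ r in Set.Ioi (0 : ℝ), r ^ 2 * (Metric.ball (0 : E3) R).indicator v (r • (w : E3))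
        = ∫ r in Set.Ioc (0 : ℝ) R, r ^ 2 * v (r • (w : E3)) := by
      rw [integral_Ioc_eq_integral_Ioo, ← Set.Ioi_inter_Iio,
        ← setIntegral_indicator measurableSet_Iio]
      refine setIntegral_congr_fun measurableSet_Ioi fun r hr => ?_
      have hr0 : 0 < r := hr
      by_cases h : r < R
      · simp [Set.indicator, norm_smul, abs_of_pos hr0, h]
      · simp [Set.indicator, norm_smul, abs_of_pos hr0, h]
    rw [setIntegral_congr_fun measurableSet_Ioi hl, radial_parts M hR hline hcline, hrhs, zero_smul]
  obtain ⟨hJi, hJ⟩ := integral_polar (hvi.indicator (measurableSet_ball (x := (0 : E3)) (ε := R)))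
  rw [hball, ← integral_indicator measurableSet_ball,
    (integral_polar (integrable_flux_field hM hR hv hc)).2, hJ]
  simp only [hray]
  rw [integral_add (integrable_const _) (hJi.const_mul _), integral_const, harea,
    integral_const_mul, smul_eq_mul]
  ring

/-- Distributional bilaplacian identity in dimension three:
`∫ ∇(Δφ_R)·∇(|u|²) = (1/R³)∫_{|x|<R} |u|² + 8πM |u(0)|²`. -/
theorem distributional_bilap_identity_dim_three
    (M : ℝ) (hM : 1 ≤ M) (R : ℝ) (hR : 0 < R)
    (u : EuclideanSpace ℝ (Fin 3) → ℂ) (hu : ContDiff ℝ (⊤ : ℕ∞) u) (hcs : HasCompactSupport u) :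
    ∫ x : EuclideanSpace ℝ (Fin 3),
        ∑ k, pdR (lap (phiR 3 M R)) k x * pdR (fun y => ‖u y‖ ^ 2) k x
      = (1 / R ^ 3) * (∫ x in {x : EuclideanSpace ℝ (Fin 3) | ‖x‖ < R}, ‖u x‖ ^ 2)
        + 8 * Real.pi * M * ‖u 0‖ ^ 2 := by
  have hv : ContDiff ℝ 1 fun y => ‖u y‖ ^ 2 := (hu.of_le (by exact_mod_cast le_top)).norm_sq ℝ
  have hc : HasCompactSupport fun y => ‖u y‖ ^ 2 :=
    hcs.comp_left (g := fun z : ℂ => ‖z‖ ^ 2) (by simp)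
  rw [← integral_flux_field (zero_le_one.trans hM) hR hv hc]
  refine integral_congr_ae ?_
  -- The origin and the sphere `|x| = R`, where the explicit formulas for `Δφ_R` change,
  -- are null sets.
  have h0 : ∀ᵐ x : E3, x ≠ 0 := Measure.ae_ne volume 0
  have hs : ∀ᵐ x : E3, x ∉ Metric.sphere (0 : E3) R :=
    measure_eq_zero_iff_ae_notMem.1 (Measure.addHaar_sphere volume 0 R)
  filter_upwards [h0, hs] with x hx hxs
  have hxR : ‖x‖ ≠ R := by simpa using hxs
  have hexp : fderiv ℝ (fun y => ‖u y‖ ^ 2) x x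
      = ∑ k, x k * pdR (fun y => ‖u y‖ ^ 2) k x := by
    have := congrArg (fderiv ℝ (fun y => ‖u y‖ ^ 2) x)
      ((EuclideanSpace.basisFun (Fin 3) ℝ).sum_repr x)
    rw [← this, map_sum]
    simp [pdR]
  simp only [pdR_lap_phiR M hR hx hxR, hexp, Finset.mul_sum, mul_assoc]
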